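/- Let n ≥ 1, 1 ≤ r ≤ q < ∞, and α, β ≥ 0, and assume α ≤ β if r = q. Then there exists C > 0 such that for every locally integrable φ on ℝ^n with ‖φ‖_{𝔏^{r,∞}(log 𝔏)^α} < ∞ and every t > 0, ‖S(t)φ‖_{𝔏^{q,∞}(log 𝔏)^β} ≤ C t^{−(n/2)(1/r − 1/q)} [log(e+1/t)]^{−α/r + β/q} ‖φ‖_{𝔏^{r,∞}(log 𝔏)^α}, where S(t) is convolution with the Gaussian heat kernel. Moreover, for q = ∞ (with the convention that the 𝔏^{∞,∞}(log 𝔏)^β norm is the L^∞ norm) the same estimate holds: ‖S(t)φ‖_{L^∞} ≤ C t^{−n/(2r)} [log(e+1/t)]^{−α/r} ‖φ‖_{𝔏^{r,∞}(log 𝔏)^α}. -/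

import Mathlib

open MeasureTheory Real Set ENNReal

noncomputable def logFac (s : ℝ) : ℝ := Real.log (Real.exp 1 + 1 / s)

noncomputable def zygNorm (n : ℕ) (q α : ℝ)
    (f : EuclideanSpace ℝ (Fin n) → ℝ) : ℝ≥0∞ :=
  ⨆ s : Set.Ioi (0 : ℝ),
    (ENNReal.ofReal (logFac s.1) ^ α *
      ⨆ E : {E : Set (EuclideanSpace ℝ (Fin n)) //
          MeasurableSet E ∧ volume E = ENNReal.ofReal s.1},
        ∫⁻ x in E.1, ENNReal.ofReal (|f x| ^ q)) ^ (1 / q)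

noncomputable def zygNormUL (n : ℕ) (q α ρ : ℝ)
    (f : EuclideanSpace ℝ (Fin n) → ℝ) : ℝ≥0∞ :=
  ⨆ z : EuclideanSpace ℝ (Fin n),
    zygNorm n q α ((Metric.ball z ρ).indicator f)

noncomputable def heatKernel (n : ℕ) (x : EuclideanSpace ℝ (Fin n)) (t : ℝ) : ℝ :=
  (4 * Real.pi * t) ^ (-(n : ℝ) / 2) * Real.exp (-‖x‖ ^ 2 / (4 * t))

noncomputable def heatSg (n : ℕ) (t : ℝ) (φ : EuclideanSpace ℝ (Fin n) → ℝ)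
    (x : EuclideanSpace ℝ (Fin n)) : ℝ :=
  ∫ y, heatKernel n (x - y) t * φ y

lemma L_ge_one {s : ℝ} (hs : 0 < s) : 1 ≤ logFac s := by
  unfold logFac
  rw [Real.le_log_iff_exp_le (by positivity)]
  have : 0 < 1 / s := by positivity
  linarith

lemma L_pos {s : ℝ} (hs : 0 < s) : 0 < logFac s := lt_of_lt_of_le one_pos (L_ge_one hs)

lemma L_anti {s s' : ℝ} (hs : 0 < s) (h : s ≤ s') : logFac s' ≤ logFac s := by
  unfold logFac
  have : 0 < s' := hs.trans_le h
  apply Real.log_le_log (by positivity)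
  gcongr

lemma L_slow {s : ℝ} (hs : 0 < s) {κ : ℝ} (hκ : 0 ≤ κ) :
    logFac s ≤ (2 + 4 * κ ^ 2) * logFac (s * logFac s ^ κ) := by
  have h1 := L_ge_one hs
  have h0 := L_pos hs
  set Λ := logFac s with hΛ
  have hp : 0 < Λ ^ κ := Real.rpow_pos_of_pos h0 _
  have hp1 : 1 ≤ Λ ^ κ := Real.one_le_rpow h1 hκ
  have h2 := L_ge_one (mul_pos hs hp)
  have hexp : Real.exp Λ = Real.exp 1 + 1 / s := by
    rw [hΛ, logFac, Real.exp_log (by positivity)]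
  have h3 : Λ - κ * Real.log Λ ≤ logFac (s * Λ ^ κ) := by
    conv_rhs => unfold logFac
    rw [Real.le_log_iff_exp_le (by positivity), Real.exp_sub, hexp, mul_comm κ, ← Real.rpow_def_of_pos h0,
      add_div, div_div]
    gcongr
    exact div_le_self (by positivity) hp1
  have h4 : Real.log Λ ≤ 2 * Real.sqrt Λ := by
    have := Real.log_le_sub_one_of_pos (Real.sqrt_pos.mpr h0)
    rw [Real.log_sqrt h0.le] at this
    linarith
  have h5 : κ * Real.log Λ ≤ Λ / 2 + 2 * κ ^ 2 := by
    have h6 := Real.sq_sqrt h0.le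
    have h7 : κ * Real.log Λ ≤ κ * (2 * Real.sqrt Λ) := by gcongr
    nlinarith [sq_nonneg (Real.sqrt Λ - 2 * κ)]
  nlinarith [sq_nonneg κ]

lemma L_scale {s s' : ℝ} (hs : 0 < s) (h : s ≤ s') {β : ℝ} (hβ : 0 ≤ β) :
    logFac s ^ β * s ≤ (β + 2) ^ β * (logFac s' ^ β * s') := by
  have hs' : 0 < s' := hs.trans_le h
  obtain ⟨l, hl⟩ : ∃ l, l = s' / s := ⟨_, rfl⟩
  have hl1 : 1 ≤ l := by rw [hl, le_div_iff₀ hs]; linarith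
  have hl0 : 0 < l := by linarith
  have e1 : s' = l * s := by rw [hl]; field_simp
  have hL := L_ge_one hs'
  have h1 : logFac s ≤ Real.log l + logFac s' := by
    unfold logFac
    rw [← Real.log_mul (by positivity) (by positivity)]
    apply Real.log_le_log (by positivity)
    have : l * (Real.exp 1 + 1 / s') = l * Real.exp 1 + 1 / s := by
      rw [e1]; field_simp
    rw [this]
    gcongr
    exact le_mul_of_one_le_left (by positivity) hl1
  have hb : 0 < β + 1 := by linarith
  have h2 : Real.log l ≤ l ^ (1 / (β + 1)) / (1 / (β + 1)) :=
    Real.log_le_rpow_div hl0.le (by positivity)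
  have hX : 1 ≤ l ^ (1 / (β + 1)) := Real.one_le_rpow hl1 (by positivity)
  have h2' : Real.log l ≤ (β + 1) * l ^ (1 / (β + 1)) := by
    refine h2.trans (le_of_eq ?_); field_simp
  have hlog := Real.log_nonneg hl1
  have h3 : logFac s ≤ (β + 2) * l ^ (1 / (β + 1)) * logFac s' := by
    have : Real.log l + logFac s' ≤ (1 + Real.log l) * logFac s' := by nlinarith
    refine h1.trans (this.trans ?_)
    gcongr
    linarith
  have h4 : logFac s ^ β ≤ (β + 2) ^ β * l * logFac s' ^ β := by
    calc logFac s ^ β ≤ ((β + 2) * l ^ (1 / (β + 1)) * logFac s') ^ β :=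
          Real.rpow_le_rpow (L_pos hs).le h3 hβ
      _ = (β + 2) ^ β * (l ^ (1 / (β + 1))) ^ β * logFac s' ^ β := by
          rw [Real.mul_rpow (by positivity) (by linarith), Real.mul_rpow (by positivity) (by positivity)]
      _ ≤ _ := by
          gcongr
          rw [← Real.rpow_mul hl0.le]
          calc l ^ (1 / (β + 1) * β) ≤ l ^ (1:ℝ) := by
                apply Real.rpow_le_rpow_of_exponent_le hl1
                rw [one_div_mul_eq_div, div_le_one hb]; linarith
            _ = l := Real.rpow_one l
  calc logFac s ^ β * s ≤ (β + 2) ^ β * l * logFac s' ^ β * s := by gcongr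
    _ = _ := by rw [e1]; ring

lemma L_pow {t m : ℝ} (ht : 0 < t) (hm : 0 ≤ m) : logFac (t ^ m) ≤ (m + 2) * logFac t := by
  have h1 := L_ge_one ht
  have he : (2:ℝ) ≤ Real.exp 1 := by have := Real.add_one_le_exp (1:ℝ); linarith
  have hx : 0 < 1 / t := by positivity
  set A := Real.exp 1 + 1 / t with hA
  have hA2 : 2 ≤ A := by linarith
  have hA0 : 0 < A := by linarith
  have : logFac (t ^ m) ≤ Real.log (A ^ (m + 2)) := by
    unfold logFac
    apply Real.log_le_log (by positivity)
    have h3 : 1 / t ^ m ≤ A ^ m := by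
      rw [one_div, ← Real.inv_rpow ht.le, ← one_div]
      exact Real.rpow_le_rpow hx.le (by linarith [Real.exp_pos 1]) hm
    have h4 : 1 ≤ A ^ m := Real.one_le_rpow (by linarith) hm
    have h5 : A ^ (m + 2) = A ^ m * (A * A) := by
      rw [Real.rpow_add hA0, Real.rpow_two, sq]
    rw [h5]
    have h6 : Real.exp 1 ≤ A := by linarith
    nlinarith [mul_nonneg (sub_nonneg.2 h4) hA0.le, mul_nonneg (sub_nonneg.2 hA2) hA0.le, mul_nonneg (sub_nonneg.2 h4) (sub_nonneg.2 hA2), mul_nonneg (mul_nonneg (sub_nonneg.2 h4) (sub_nonneg.2 hA2)) hA0.le]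
  refine this.trans ?_
  rw [Real.log_rpow hA0]
  exact le_rfl

lemma L_comp {m : ℝ} (hm : 0 < m) (p : ℝ) : ∃ C > (0:ℝ), ∀ t : ℝ, 0 < t →
    logFac (t ^ m) ^ p ≤ C * logFac t ^ p := by
  refine ⟨(m + 2) ^ |p| + (m⁻¹ + 2) ^ |p|, by positivity, fun t ht => ?_⟩
  have hs : 0 < t ^ m := Real.rpow_pos_of_pos ht _
  have a := L_pos ht
  have b := L_pos hs
  have h1 := L_pow ht hm.le
  have h2 := L_pow hs (inv_nonneg.2 hm.le)
  rw [← Real.rpow_mul ht.le, mul_inv_cancel₀ hm.ne', Real.rpow_one] at h2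
  rcases le_total 0 p with hp | hp
  · rw [abs_of_nonneg hp]
    calc _ ≤ ((m + 2) * logFac t) ^ p := Real.rpow_le_rpow b.le h1 hp
      _ = (m + 2) ^ p * logFac t ^ p := Real.mul_rpow (by positivity) a.le
      _ ≤ _ := by
        gcongr
        have : 0 < (m⁻¹ + 2) ^ p := by positivity
        linarith
  · rw [abs_of_nonpos hp]
    have : ((m⁻¹ + 2) * logFac (t ^ m)) ^ p ≤ logFac t ^ p :=
      Real.rpow_le_rpow_of_nonpos a h2 hp
    rw [Real.mul_rpow (by positivity) b.le] at this
    calc logFac (t ^ m) ^ p = (m⁻¹ + 2) ^ (-p) * ((m⁻¹ + 2) ^ p * logFac (t ^ m) ^ p) := by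
          rw [← mul_assoc, ← Real.rpow_add (by positivity)]; simp
      _ ≤ (m⁻¹ + 2) ^ (-p) * logFac t ^ p := by gcongr
      _ ≤ _ := by
        gcongr
        have : 0 < (m + 2) ^ (-p) := by positivity
        linarith

lemma int_le_of_zyg {n : ℕ} {r α N : ℝ} (hr : 0 < r) (hN : 0 ≤ N)
    {f : EuclideanSpace ℝ (Fin n) → ℝ} (h : zygNorm n r α f ≤ ENNReal.ofReal N)
    {s : ℝ} (hs : 0 < s) {E : Set (EuclideanSpace ℝ (Fin n))} (hE : MeasurableSet E)
    (hv : volume E = ENNReal.ofReal s) :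
    ∫⁻ x in E, ENNReal.ofReal (|f x| ^ r) ≤ ENNReal.ofReal (logFac s ^ (-α) * N ^ r) := by
  have hL := L_pos hs
  have h1 := (iSup_le_iff.1 h) ⟨s, hs⟩
  simp only at h1
  rw [one_div, ENNReal.rpow_inv_le_iff hr, ENNReal.ofReal_rpow_of_nonneg hN hr.le,
    ENNReal.ofReal_rpow_of_pos hL] at h1
  have h2 : ENNReal.ofReal (logFac s ^ α) * ∫⁻ x in E, ENNReal.ofReal (|f x| ^ r) ≤
      ENNReal.ofReal (N ^ r) := by
    refine le_trans ?_ h1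
    gcongr
    exact le_iSup (fun E : {E : Set (EuclideanSpace ℝ (Fin n)) //
          MeasurableSet E ∧ volume E = ENNReal.ofReal s} =>
        ∫⁻ x in E.1, ENNReal.ofReal (|f x| ^ r)) ⟨E, hE, hv⟩
  calc ∫⁻ x in E, ENNReal.ofReal (|f x| ^ r)
      = ENNReal.ofReal (logFac s ^ (-α)) * (ENNReal.ofReal (logFac s ^ α) *
          ∫⁻ x in E, ENNReal.ofReal (|f x| ^ r)) := by
        rw [← mul_assoc, ← ENNReal.ofReal_mul (by positivity), ← Real.rpow_add hL]; simp
    _ ≤ _ := by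
        rw [ENNReal.ofReal_mul (by positivity)]
        gcongr

lemma zyg_le {n : ℕ} {q β B : ℝ} (hq : 0 < q) (hB : 0 ≤ B)
    {f : EuclideanSpace ℝ (Fin n) → ℝ}
    (h : ∀ s : ℝ, 0 < s → ∀ E : Set (EuclideanSpace ℝ (Fin n)), MeasurableSet E →
      volume E = ENNReal.ofReal s →
      ∫⁻ x in E, ENNReal.ofReal (|f x| ^ q) ≤ ENNReal.ofReal (logFac s ^ (-β) * B ^ q)) :
    zygNorm n q β f ≤ ENNReal.ofReal B := by
  refine iSup_le fun ⟨s, hs⟩ => ?_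
  have hs : 0 < s := hs
  have hL := L_pos hs
  simp only
  rw [one_div, ENNReal.rpow_inv_le_iff hq, ENNReal.ofReal_rpow_of_nonneg hB hq.le,
    ENNReal.ofReal_rpow_of_pos hL]
  have : (⨆ E : {E : Set (EuclideanSpace ℝ (Fin n)) //
          MeasurableSet E ∧ volume E = ENNReal.ofReal s},
        ∫⁻ x in E.1, ENNReal.ofReal (|f x| ^ q)) ≤
        ENNReal.ofReal (logFac s ^ (-β) * B ^ q) :=
    iSup_le fun E => h s hs E.1 E.2.1 E.2.2
  calc _ ≤ ENNReal.ofReal (logFac s ^ β) * ENNReal.ofReal (logFac s ^ (-β) * B ^ q) := by gcongr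
    _ = _ := by
      rw [← ENNReal.ofReal_mul (by positivity), ← mul_assoc, ← Real.rpow_add hL]; simp

/-- splitting the power -/
lemma split_pow {X : Type*} [MeasurableSpace X] {μ : Measure X} {U : X → ℝ≥0∞}
    {r q c : ℝ} (hr : 0 ≤ r) (hrq : r ≤ q) (hc : 0 ≤ c)
    {E : Set X} (hE : MeasurableSet E) (hU : ∀ x ∈ E, U x ≤ ENNReal.ofReal c) {B : ℝ}
    (h : ∫⁻ x in E, U x ^ r ∂μ ≤ ENNReal.ofReal B) :
    ∫⁻ x in E, U x ^ q ∂μ ≤ ENNReal.ofReal (c ^ (q - r) * B) := by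
  have hd : 0 ≤ q - r := by linarith
  calc ∫⁻ x in E, U x ^ q ∂μ ≤ ∫⁻ x in E, ENNReal.ofReal (c ^ (q - r)) * U x ^ r ∂μ := by
        refine setLIntegral_mono' hE fun x hx => ?_
        have : U x ^ q = U x ^ (q - r) * U x ^ r := by
          rw [← ENNReal.rpow_add_of_nonneg _ _ hd hr]; congr 1; ring
        rw [this, ← ENNReal.ofReal_rpow_of_nonneg hc hd]
        gcongr
        exact hU x hx
    _ = ENNReal.ofReal (c ^ (q - r)) * ∫⁻ x in E, U x ^ r ∂μ :=
        lintegral_const_mul' _ _ ENNReal.ofReal_ne_top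
    _ ≤ _ := by
        rw [ENNReal.ofReal_mul (by positivity)]
        gcongr

lemma core {r q α β C1 : ℝ} (hr : 1 ≤ r) (hrq : r ≤ q)
    (hα : 0 ≤ α) (hβ : 0 ≤ β) (hcrit : r = q → α ≤ β) (hC1 : 1 ≤ C1) :
    ∃ C > (0:ℝ), ∀ {X : Type} [MeasurableSpace X] (μ : Measure X) (U : X → ℝ≥0∞) (s₀ N : ℝ),
      Measurable U → 0 < s₀ → 0 < N →
      (∀ x, U x ≤ ENNReal.ofReal ((C1 * s₀⁻¹ * logFac s₀ ^ (-α)) ^ (1 / r) * N)) →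
      (∀ s : ℝ, 0 < s → ∀ E : Set X, MeasurableSet E → μ E = ENNReal.ofReal s →
        ∫⁻ x in E, U x ^ r ∂μ ≤ ENNReal.ofReal (logFac s ^ (-α) * N ^ r)) →
      ∀ s : ℝ, 0 < s → ∀ E : Set X, MeasurableSet E → μ E = ENNReal.ofReal s →
        ∫⁻ x in E, U x ^ q ∂μ ≤ ENNReal.ofReal
          (logFac s ^ (-β) * (C * s₀ ^ (1 - q / r) * logFac s₀ ^ (-α * q / r + β) * N ^ q)) := by
  have hr0 : 0 < r := by linarith
  have hq0 : 0 < q := by linarith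
  -- constants
  obtain ⟨κ, hκ⟩ : ∃ κ : ℝ, κ = α * r / (q - r) + α := ⟨_, rfl⟩
  have hκ0 : 0 ≤ κ := by
    rw [hκ]; have : 0 ≤ q - r := by linarith
    positivity
  obtain ⟨c3, hc3⟩ : ∃ c : ℝ, c = (2 + 4 * κ ^ 2) ^ α := ⟨_, rfl⟩
  have hc30 : 0 < c3 := by rw [hc3]; positivity
  refine ⟨C1 ^ (q / r) * (β + 2) ^ β + 1 + C1 ^ ((q - r) / r) * (1 + c3), by positivity, ?_⟩
  intro X _ μ U s₀ N hUm hs₀ hN hM hE s hs E hEm hv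
  have hL0 := L_pos hs₀
  have hL01 := L_ge_one hs₀
  have hLs := L_pos hs
  obtain ⟨l, hl⟩ : ∃ l, l = logFac s₀ := ⟨_, rfl⟩
  rw [← hl] at hL0 hL01 hM ⊢
  obtain ⟨M, hMd⟩ : ∃ M, M = (C1 * s₀⁻¹ * l ^ (-α)) ^ (1 / r) * N := ⟨_, rfl⟩
  have hM0 : 0 < M := by rw [hMd]; positivity
  have hMp : ∀ p : ℝ, M ^ p = C1 ^ (p / r) * s₀ ^ (-(p / r)) * l ^ (-α * p / r) * N ^ p := by
    intro p
    rw [hMd, Real.mul_rpow (by positivity) hN.le, ← Real.rpow_mul (by positivity),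
      Real.mul_rpow (by positivity) (by positivity), Real.mul_rpow (by positivity) (by positivity),
      ← Real.rpow_mul (by positivity), ← Real.rpow_neg_one s₀, ← Real.rpow_mul (by positivity)]
    have e1 : 1 / r * p = p / r := by ring
    have e2 : -1 * (p / r) = -(p / r) := by ring
    have e3 : -α * (p / r) = -α * p / r := by ring
    rw [e1, e2, e3]
  rw [← hMd] at hM
  have hden : 0 < s₀ ^ (1 - q / r) * l ^ (-α * q / r + β) * N ^ q := by positivity
  -- absorb the constant
  have fin : ∀ c b : ℝ, b ≤ logFac s ^ (-β) * (c * s₀ ^ (1 - q / r) * l ^ (-α * q / r + β) * N ^ q) →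
      c ≤ C1 ^ (q / r) * (β + 2) ^ β + 1 + C1 ^ ((q - r) / r) * (1 + c3) →
      b ≤ logFac s ^ (-β) * ((C1 ^ (q / r) * (β + 2) ^ β + 1 + C1 ^ ((q - r) / r) * (1 + c3)) *
         s₀ ^ (1 - q / r) * l ^ (-α * q / r + β) * N ^ q) := by
    intro c b h1 h2
    refine h1.trans ?_
    gcongr
  have k1 : 0 < C1 ^ (q / r) * (β + 2) ^ β := by positivity
  have k2 : 0 < C1 ^ ((q - r) / r) * (1 + c3) := by positivity
  rcases le_total s s₀ with hss | hss
  · -- small sets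
    have h1 : ∫⁻ x in E, U x ^ q ∂μ ≤ ENNReal.ofReal (M ^ q * s) := by
      have h0 : ∫⁻ x in E, U x ^ (0:ℝ) ∂μ ≤ ENNReal.ofReal s := by simp [hv]
      simpa using split_pow (le_refl 0) hq0.le hM0.le hEm (fun x _ => hM x) h0
    refine h1.trans (ENNReal.ofReal_le_ofReal (fin (C1 ^ (q / r) * (β + 2) ^ β) _ ?_ (by linarith)))
    have h2 := L_scale hs hss hβ
    rw [← hl] at h2
    have h3 : s ≤ logFac s ^ (-β) * ((β + 2) ^ β * (l ^ β * s₀)) := by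
      calc s = logFac s ^ (-β) * (logFac s ^ β * s) := by
            rw [← mul_assoc, ← Real.rpow_add hLs]; simp
        _ ≤ _ := by gcongr
    calc M ^ q * s ≤ M ^ q * (logFac s ^ (-β) * ((β + 2) ^ β * (l ^ β * s₀))) := by gcongr
      _ = _ := by
        rw [hMp, Real.rpow_add hL0, sub_eq_add_neg, Real.rpow_add hs₀, Real.rpow_one]; ring
  rcases hrq.eq_or_lt with heq | hlt
  · -- r = q
    have hab := hcrit heq
    subst heq
    refine (hE s hs E hEm hv).trans (ENNReal.ofReal_le_ofReal (fin 1 _ ?_ (by linarith)))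
    have h1 : logFac s ^ (β - α) ≤ l ^ (β - α) := by
      apply Real.rpow_le_rpow hLs.le _ (by linarith)
      rw [hl]; exact L_anti hs₀ hss
    have e1 : (1 - r / r) = 0 := by field_simp; ring
    have e2 : -α * r / r + β = β - α := by field_simp; ring
    rw [e1, e2, Real.rpow_zero]
    calc logFac s ^ (-α) * N ^ r = logFac s ^ (-β) * (logFac s ^ (β - α) * N ^ r) := by
          rw [← mul_assoc, ← Real.rpow_add hLs]; congr 2; ring
      _ ≤ logFac s ^ (-β) * (l ^ (β - α) * N ^ r) := by gcongr
      _ = _ := by ring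
  · have hd : 0 < q - r := by linarith
    have hsup : ∫⁻ x in E, U x ^ r ∂μ ≤ ENNReal.ofReal (N ^ r) := by
      refine (hE s hs E hEm hv).trans (ENNReal.ofReal_le_ofReal ?_)
      have : logFac s ^ (-α) ≤ 1 := Real.rpow_le_one_of_one_le_of_nonpos (L_ge_one hs) (by linarith)
      have : 0 < N ^ r := by positivity
      nlinarith
    obtain ⟨τ, hτ⟩ : ∃ τ : ℝ, τ = l ^ (-α / (q - r)) := ⟨_, rfl⟩
    have hτ0 : 0 < τ := by rw [hτ]; positivity
    have hτp : ∀ p, τ ^ p = l ^ (-α / (q - r) * p) := fun p => by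
      rw [hτ, ← Real.rpow_mul hL0.le]
    let A : Set X := {x | ENNReal.ofReal (τ * M) ≤ U x}
    have hA : MeasurableSet A := measurableSet_le measurable_const hUm
    -- low part
    have low : ∫⁻ x in E \ A, U x ^ q ∂μ ≤ ENNReal.ofReal (M ^ (q - r) * (l ^ (-α) * N ^ r)) := by
      have h1 : ∫⁻ x in E \ A, U x ^ r ∂μ ≤ ENNReal.ofReal (N ^ r) :=
        (lintegral_mono_set sdiff_subset).trans hsup
      have h2 := split_pow hr0.le hrq (c := τ * M) (by positivity) (hEm.diff hA)
        (fun x hx => le_of_lt (not_le.1 hx.2)) h1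
      refine h2.trans (le_of_eq ?_)
      congr 1
      rw [Real.mul_rpow hτ0.le hM0.le, hτp]
      have : -α / (q - r) * (q - r) = -α := by field_simp
      rw [this]; ring
    -- high part
    have high : ∫⁻ x in E ∩ A, U x ^ q ∂μ ≤
        ENNReal.ofReal (M ^ (q - r) * (c3 * l ^ (-α) * N ^ r)) := by
      have hEA := hEm.inter hA
      refine split_pow hr0.le hrq hM0.le hEA (fun x _ => hM x) ?_
      have hfin : μ (E ∩ A) ≠ ⊤ := by
        refine ne_top_of_le_ne_top ?_ (measure_mono inter_subset_left)
        rw [hv]; exact ENNReal.ofReal_ne_top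
      rcases eq_or_ne (μ (E ∩ A)) 0 with h0 | h0
      · rw [Measure.restrict_eq_zero.2 h0]; simp
      obtain ⟨a, ha⟩ : ∃ a, a = (μ (E ∩ A)).toReal := ⟨_, rfl⟩
      have ha0 : 0 < a := by rw [ha]; exact ENNReal.toReal_pos h0 hfin
      have hav : μ (E ∩ A) = ENNReal.ofReal a := by rw [ha, ENNReal.ofReal_toReal hfin]
      refine (hE a ha0 _ hEA hav).trans (ENNReal.ofReal_le_ofReal ?_)
      -- Chebyshev
      have cheb : ENNReal.ofReal ((τ * M) ^ r) * μ (E ∩ A) ≤ ENNReal.ofReal (N ^ r) := by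
        refine le_trans ?_ hsup
        refine le_trans ?_ (lintegral_mono_set (inter_subset_left (t := A)))
        rw [← setLIntegral_const]
        refine setLIntegral_mono' hEA fun x hx => ?_
        rw [← ENNReal.ofReal_rpow_of_nonneg (by positivity) hr0.le]
        exact ENNReal.rpow_le_rpow hx.2 hr0.le
      rw [hav, ← ENNReal.ofReal_mul (by positivity), ENNReal.ofReal_le_ofReal_iff (by positivity)] at cheb
      have ha1 : a ≤ s₀ * l ^ κ := by
        rw [Real.mul_rpow hτ0.le hM0.le, hτp, hMp, div_self hr0.ne', Real.rpow_one,
          Real.rpow_neg_one] at cheb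
        have e1 : l ^ (-α / (q - r) * r) * (C1 * s₀⁻¹ * l ^ (-α * r / r) * N ^ r) * a
            = (C1 * s₀⁻¹ * l ^ (-κ) * a) * N ^ r := by
          have : l ^ (-κ) = l ^ (-α / (q - r) * r) * l ^ (-α * r / r) := by
            rw [← Real.rpow_add hL0]; congr 1; rw [hκ]; field_simp; ring
          rw [this]; ring
        rw [e1] at cheb
        have h5 : C1 * s₀⁻¹ * l ^ (-κ) * a ≤ 1 := by
          have : 0 < N ^ r := by positivity
          by_contra hcon
          push Not at hcon
          nlinarith
        have h6 : 1 * (s₀⁻¹ * l ^ (-κ) * a) ≤ C1 * (s₀⁻¹ * l ^ (-κ) * a) := by gcongr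
        have h7 : s₀⁻¹ * l ^ (-κ) * a ≤ 1 := by linarith
        rw [Real.rpow_neg hL0.le] at h7
        have hp : 0 < l ^ κ := by positivity
        calc a = (s₀ * l ^ κ) * (s₀⁻¹ * (l ^ κ)⁻¹ * a) := by field_simp
          _ ≤ (s₀ * l ^ κ) * 1 := by gcongr
          _ = _ := mul_one _
      have h8 : l ≤ (2 + 4 * κ ^ 2) * logFac a := by
        have := L_slow hs₀ hκ0
        rw [← hl] at this
        refine this.trans ?_
        gcongr
        exact L_anti ha0 ha1
      have hLa := L_pos ha0
      have h9 : logFac a ^ (-α) ≤ c3 * l ^ (-α) := by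
        have h10 : l ^ α ≤ c3 * logFac a ^ α := by
          rw [hc3, ← Real.mul_rpow (by positivity) hLa.le]
          exact Real.rpow_le_rpow hL0.le h8 hα
        rw [Real.rpow_neg hLa.le, Real.rpow_neg hL0.le, ← div_eq_mul_inv, inv_eq_one_div,
          div_le_div_iff₀ (by positivity) (by positivity)]
        linarith
      gcongr
    have tot : ∫⁻ x in E, U x ^ q ∂μ ≤ ENNReal.ofReal (M ^ (q - r) * ((1 + c3) * l ^ (-α) * N ^ r)) := by
      rw [← lintegral_inter_add_sdiff _ E hA]
      refine (add_le_add high low).trans ?_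
      rw [← ENNReal.ofReal_add (by positivity) (by positivity)]
      apply le_of_eq; congr 1; ring
    refine tot.trans (ENNReal.ofReal_le_ofReal (fin (C1 ^ ((q - r) / r) * (1 + c3)) _ ?_ (by linarith)))
    have h1 : 1 ≤ logFac s ^ (-β) * l ^ β := by
      have : logFac s ^ β ≤ l ^ β := by
        apply Real.rpow_le_rpow hLs.le _ hβ
        rw [hl]; exact L_anti hs₀ hss
      calc 1 = logFac s ^ (-β) * logFac s ^ β := by rw [← Real.rpow_add hLs]; simp
        _ ≤ _ := by gcongr
    calc M ^ (q - r) * ((1 + c3) * l ^ (-α) * N ^ r)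
        ≤ (M ^ (q - r) * ((1 + c3) * l ^ (-α) * N ^ r)) * (logFac s ^ (-β) * l ^ β) :=
          le_mul_of_one_le_right (by positivity) h1
      _ = _ := by
        rw [hMp]
        have e1 : s₀ ^ (1 - q / r) = s₀ ^ (-((q - r) / r)) := by congr 1; field_simp; ring
        have e2 : l ^ (-α * q / r + β) = l ^ (-α * (q - r) / r) * l ^ (-α) * l ^ β := by
          rw [← Real.rpow_add hL0, ← Real.rpow_add hL0]; congr 1; field_simp; ring
        have e3 : N ^ q = N ^ (q - r) * N ^ r := by
          rw [← Real.rpow_add hN]; congr 1; ring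
        rw [e1, e2, e3]; ring

lemma hk_nonneg (n : ℕ) (x : EuclideanSpace ℝ (Fin n)) {t : ℝ} (ht : 0 < t) :
    0 ≤ heatKernel n x t := by unfold heatKernel; positivity

lemma hk_cont (n : ℕ) (t : ℝ) : Continuous fun x => heatKernel n x t := by
  unfold heatKernel; fun_prop

lemma hk_meas (n : ℕ) (t : ℝ) : Measurable fun x => ENNReal.ofReal (heatKernel n x t) :=
  (hk_cont n t).measurable.ennreal_ofReal

lemma hk_int (n : ℕ) {t : ℝ} (ht : 0 < t) :
    ∫⁻ x, ENNReal.ofReal (heatKernel n x t) = 1 := by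
  have h1 := GaussianFourier.integral_rexp_neg_mul_sq_norm
    (V := EuclideanSpace ℝ (Fin n)) (b := 1 / (4 * t)) (by positivity)
  have e : ∀ x : EuclideanSpace ℝ (Fin n), heatKernel n x t =
      (4 * Real.pi * t) ^ (-(n : ℝ) / 2) * Real.exp (-(1 / (4 * t)) * ‖x‖ ^ 2) := by
    intro x; unfold heatKernel; congr 2; ring
  have hI : ∫ x, heatKernel n x t = 1 := by
    simp_rw [e]
    rw [integral_const_mul, h1, finrank_euclideanSpace_fin]
    have : Real.pi / (1 / (4 * t)) = 4 * Real.pi * t := by field_simp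
    rw [this, ← Real.rpow_add (by positivity)]
    have : -(n:ℝ) / 2 + n / 2 = 0 := by ring
    rw [this, Real.rpow_zero]
  have hint : Integrable (fun x => heatKernel n x t) volume := by
    by_contra h
    rw [integral_undef h] at hI
    exact zero_ne_one hI
  rw [← ofReal_integral_eq_lintegral_ofReal hint (ae_of_all _ fun x => hk_nonneg n x ht), hI]
  simp

/-- Jensen -/
lemma jensen {X : Type*} [MeasurableSpace X] {μ : Measure X} {w : X → ℝ≥0∞} (hw : Measurable w)
    (h1 : ∫⁻ x, w x ∂μ = 1) {g : X → ℝ} (hg : Measurable g) {r : ℝ} (hr : 1 ≤ r) :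
    (∫⁻ x, w x * ‖g x‖ₑ ∂μ) ^ r ≤ ∫⁻ x, w x * ‖g x‖ₑ ^ r ∂μ := by
  have hr0 : 0 < r := by linarith
  have : IsProbabilityMeasure (μ.withDensity w) := ⟨by simp [h1]⟩
  have h := eLpNorm'_le_eLpNorm'_of_exponent_le one_pos hr (μ.withDensity w)
    hg.aestronglyMeasurable
  unfold eLpNorm' at h
  simp only [ENNReal.rpow_one, one_div, inv_one] at h
  rw [ENNReal.le_rpow_inv_iff hr0, lintegral_withDensity_eq_lintegral_mul _ hw hg.enorm,
    lintegral_withDensity_eq_lintegral_mul _ hw (hg.enorm.pow_const r)] at h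
  exact h

lemma conv_set {n : ℕ} {w ψ : EuclideanSpace ℝ (Fin n) → ℝ≥0∞} (hw : Measurable w)
    (h1 : ∫⁻ x, w x = 1) (hψ : Measurable ψ) {s : ℝ} {K : ℝ≥0∞}
    (h : ∀ E : Set (EuclideanSpace ℝ (Fin n)), MeasurableSet E → volume E = ENNReal.ofReal s →
      ∫⁻ x in E, ψ x ≤ K) {E : Set (EuclideanSpace ℝ (Fin n))} (hE : MeasurableSet E)
    (hv : volume E = ENNReal.ofReal s) :
    ∫⁻ x in E, ∫⁻ y, w (x - y) * ψ y ≤ K := by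
  have e1 : ∀ x, ∫⁻ y, w (x - y) * ψ y = ∫⁻ z, w z * ψ (x - z) := by
    intro x
    rw [← lintegral_sub_left_eq_self (fun z => w z * ψ (x - z)) x]
    simp
  simp_rw [e1]
  rw [lintegral_lintegral_swap (by
    apply Measurable.aemeasurable
    apply Measurable.mul
    · exact hw.comp measurable_snd
    · exact hψ.comp (measurable_fst.sub measurable_snd))]
  calc ∫⁻ z, ∫⁻ x in E, w z * ψ (x - z) ≤ ∫⁻ z, w z * K := by
        refine lintegral_mono fun z => ?_
        rw [lintegral_const_mul _ (by fun_prop)]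
        gcongr
        have hp : MeasurePreserving (fun x : EuclideanSpace ℝ (Fin n) => x + z) volume volume :=
          measurePreserving_add_right volume z
        have hE' : MeasurableSet ((fun x => x + z) ⁻¹' E) := hp.measurable hE
        refine le_trans (le_of_eq ?_) (h ((fun x => x + z) ⁻¹' E) hE'
          (by rw [hp.measure_preimage hE.nullMeasurableSet, hv]))
        rw [← lintegral_indicator hE, ← lintegral_indicator hE',
          ← lintegral_add_right_eq_self _ z]
        congr 1; ext x
        simp only [indicator, add_sub_cancel_right]
        rfl
    _ = K := by rw [lintegral_mul_const _ hw, h1, one_mul]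

lemma exists_radius (n : ℕ) (hn : 1 ≤ n) : ∃ a > (0:ℝ), ∀ t : ℝ, 0 < t →
    ∀ x : EuclideanSpace ℝ (Fin n),
      volume (Metric.ball x (a * Real.sqrt t)) = ENNReal.ofReal (t ^ ((n:ℝ) / 2)) := by
  have : Nonempty (Fin n) := ⟨⟨0, hn⟩⟩
  have hn0 : (n:ℝ) ≠ 0 := by positivity
  obtain ⟨v, hv⟩ : ∃ v, v = (volume (Metric.ball (0 : EuclideanSpace ℝ (Fin n)) 1)).toReal := ⟨_, rfl⟩
  have hv' : volume (Metric.ball (0 : EuclideanSpace ℝ (Fin n)) 1) = ENNReal.ofReal v := by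
    rw [hv, ENNReal.ofReal_toReal measure_ball_lt_top.ne]
  have hv0 : 0 < v := by
    rw [hv]
    exact ENNReal.toReal_pos (Metric.measure_ball_pos _ _ one_pos).ne' measure_ball_lt_top.ne
  refine ⟨v ^ (-1 / (n:ℝ)), by positivity, fun t ht x => ?_⟩
  rw [Measure.addHaar_ball _ _ (by positivity), hv', ← ENNReal.ofReal_mul (by positivity),
    finrank_euclideanSpace_fin, mul_pow, ← Real.rpow_natCast, ← Real.rpow_mul hv0.le,
    Real.sqrt_eq_rpow, ← Real.rpow_natCast, ← Real.rpow_mul ht.le]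
  congr 1
  have e1 : -1 / (n:ℝ) * n = -1 := by field_simp
  have e2 : 1 / 2 * (n:ℝ) = n / 2 := by ring
  rw [e1, e2, Real.rpow_neg_one]
  field_simp

lemma hk_compare (n : ℕ) {a t : ℝ} (ht : 0 < t) (y v : EuclideanSpace ℝ (Fin n))
    (h : ‖v - y‖ ≤ a * Real.sqrt t) :
    heatKernel n y t ≤ (2:ℝ) ^ ((n:ℝ) / 2) * Real.exp (a ^ 2 / 4) * heatKernel n v (2 * t) := by
  unfold heatKernel
  have e1 : (4 * Real.pi * (2 * t)) ^ (-(n:ℝ) / 2) =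
      (2:ℝ) ^ (-(n:ℝ) / 2) * (4 * Real.pi * t) ^ (-(n:ℝ) / 2) := by
    rw [← Real.mul_rpow (by positivity) (by positivity)]; congr 1; ring
  have e2 : (2:ℝ) ^ ((n:ℝ) / 2) * 2 ^ (-(n:ℝ) / 2) = 1 := by
    rw [← Real.rpow_add (by positivity)]
    have : (n:ℝ) / 2 + -n / 2 = 0 := by ring
    rw [this, Real.rpow_zero]
  have key : -‖y‖ ^ 2 / (4 * t) ≤ a ^ 2 / 4 + -‖v‖ ^ 2 / (4 * (2 * t)) := by
    have h1 : ‖v‖ ≤ ‖y‖ + ‖v - y‖ := by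
      have := norm_add_le y (v - y); simpa using this
    have h2 : ‖v - y‖ ^ 2 ≤ a ^ 2 * t := by
      calc ‖v - y‖ ^ 2 ≤ (a * Real.sqrt t) ^ 2 := by gcongr
        _ = _ := by rw [mul_pow, Real.sq_sqrt ht.le]
    have h3 : ‖v‖ ^ 2 ≤ 2 * ‖y‖ ^ 2 + 2 * (a ^ 2 * t) := by
      nlinarith [sq_nonneg (‖y‖ - ‖v - y‖), norm_nonneg v, norm_nonneg y, norm_nonneg (v - y)]
    have : a ^ 2 / 4 + -‖v‖ ^ 2 / (4 * (2 * t)) - -‖y‖ ^ 2 / (4 * t) =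
        (2 * ‖y‖ ^ 2 + 2 * (a ^ 2 * t) - ‖v‖ ^ 2) / (8 * t) := by field_simp; ring
    have h4 : 0 ≤ (2 * ‖y‖ ^ 2 + 2 * (a ^ 2 * t) - ‖v‖ ^ 2) / (8 * t) :=
      div_nonneg (by linarith) (by positivity)
    linarith
  calc _ ≤ (4 * Real.pi * t) ^ (-(n:ℝ) / 2) * Real.exp (a ^ 2 / 4 + -‖v‖ ^ 2 / (4 * (2 * t))) := by
        gcongr
    _ = ((2:ℝ) ^ ((n:ℝ) / 2) * 2 ^ (-(n:ℝ) / 2)) * ((4 * Real.pi * t) ^ (-(n:ℝ) / 2) *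
        (Real.exp (a ^ 2 / 4) * Real.exp (-‖v‖ ^ 2 / (4 * (2 * t))))) := by
        rw [e2, one_mul, Real.exp_add]
    _ = _ := by rw [e1]; ring

lemma conv_sup (n : ℕ) (hn : 1 ≤ n) : ∃ C1 : ℝ, 1 ≤ C1 ∧
    ∀ (ψ : EuclideanSpace ℝ (Fin n) → ℝ≥0∞) (t : ℝ) (K : ℝ≥0∞), Measurable ψ → 0 < t →
    (∀ E : Set (EuclideanSpace ℝ (Fin n)), MeasurableSet E →
      volume E = ENNReal.ofReal (t ^ ((n:ℝ) / 2)) → ∫⁻ x in E, ψ x ≤ K) →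
    ∀ x, ∫⁻ y, ENNReal.ofReal (heatKernel n (x - y) t) * ψ y ≤
      ENNReal.ofReal (C1 * (t ^ ((n:ℝ) / 2))⁻¹) * K := by
  obtain ⟨a, ha, hball⟩ := exists_radius n hn
  obtain ⟨C1, hC1⟩ : ∃ C1, C1 = (2:ℝ) ^ ((n:ℝ) / 2) * Real.exp (a ^ 2 / 4) := ⟨_, rfl⟩
  have hC11 : 1 ≤ C1 := by
    rw [hC1]
    have h1 : (1:ℝ) ≤ (2:ℝ) ^ ((n:ℝ) / 2) := Real.one_le_rpow (by norm_num) (by positivity)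
    have h2 : 1 ≤ Real.exp (a ^ 2 / 4) := Real.one_le_exp (by positivity)
    nlinarith
  refine ⟨C1, hC11, ?_⟩
  intro ψ t K hψ ht hK x
  have hC0 : 0 < C1 := by linarith
  have hs : 0 < t ^ ((n:ℝ) / 2) := by positivity
  obtain ⟨s, hsd⟩ : ∃ s, s = t ^ ((n:ℝ) / 2) := ⟨_, rfl⟩
  rw [← hsd] at hs ⊢
  set G2 : EuclideanSpace ℝ (Fin n) → ℝ≥0∞ := fun v => ENNReal.ofReal (heatKernel n v (2 * t)) with hG2
  have hG2m : Measurable G2 := hk_meas n (2 * t)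
  set S : Set (EuclideanSpace ℝ (Fin n) × EuclideanSpace ℝ (Fin n)) :=
    {p | dist p.1 (x - p.2) < a * Real.sqrt t} with hS
  have hSm : MeasurableSet S := by
    apply IsOpen.measurableSet
    exact isOpen_lt (by fun_prop) continuous_const
  -- pointwise kernel bound
  have pk : ∀ y, ENNReal.ofReal (heatKernel n (x - y) t) ≤
      ENNReal.ofReal (C1 * s⁻¹) * ∫⁻ v, S.indicator (fun p => G2 p.2) (y, v) := by
    intro y
    have h1 : ∀ v ∈ Metric.ball (x - y) (a * Real.sqrt t),
        ENNReal.ofReal (C1⁻¹ * heatKernel n (x - y) t) ≤ G2 v := by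
      intro v hv
      rw [Metric.mem_ball, dist_eq_norm] at hv
      apply ENNReal.ofReal_le_ofReal
      have := hk_compare n ht (x - y) v hv.le
      rw [← hC1] at this
      rw [inv_mul_le_iff₀ hC0]; exact this
    have h2 : ENNReal.ofReal (C1⁻¹ * heatKernel n (x - y) t) * ENNReal.ofReal s ≤
        ∫⁻ v, S.indicator (fun p => G2 p.2) (y, v) := by
      rw [hsd, ← hball t ht (x - y), ← setLIntegral_const]
      refine (setLIntegral_mono' measurableSet_ball h1).trans ?_
      rw [← lintegral_indicator measurableSet_ball]
      refine lintegral_mono fun v => ?_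
      by_cases hv : v ∈ Metric.ball (x - y) (a * Real.sqrt t)
      · rw [indicator_of_mem hv, indicator_of_mem]
        rw [hS, mem_ofPred_eq]
        rw [Metric.mem_ball, dist_eq_norm, ← norm_neg] at hv
        rw [dist_eq_norm]
        have e : y - (x - v) = v - (x - y) := by abel
        rw [norm_neg] at hv
        simpa only [e] using hv
      · rw [indicator_of_notMem hv]; exact zero_le
    calc ENNReal.ofReal (heatKernel n (x - y) t) = ENNReal.ofReal (C1 * s⁻¹) *
          (ENNReal.ofReal (C1⁻¹ * heatKernel n (x - y) t) * ENNReal.ofReal s) := by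
          have := hk_nonneg n (x - y) ht
          rw [← ENNReal.ofReal_mul (by positivity), ← ENNReal.ofReal_mul (by positivity)]
          congr 1; field_simp
      _ ≤ _ := by gcongr
  have hm : Measurable (S.indicator (fun p => G2 p.2)) :=
    (hG2m.comp measurable_snd).indicator hSm
  calc ∫⁻ y, ENNReal.ofReal (heatKernel n (x - y) t) * ψ y
      ≤ ∫⁻ y, ENNReal.ofReal (C1 * s⁻¹) * ∫⁻ v, S.indicator (fun p => G2 p.2) (y, v) * ψ y := by
        refine lintegral_mono fun y => ?_
        have hmy : Measurable fun v => S.indicator (fun p => G2 p.2) (y, v) :=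
          hm.comp measurable_prodMk_left
        rw [lintegral_mul_const _ hmy, ← mul_assoc]
        gcongr
        exact pk y
    _ = ENNReal.ofReal (C1 * s⁻¹) * ∫⁻ v, ∫⁻ y, S.indicator (fun p => G2 p.2) (y, v) * ψ y := by
        rw [lintegral_const_mul' _ _ ENNReal.ofReal_ne_top, lintegral_lintegral_swap]
        apply Measurable.aemeasurable
        exact hm.mul (hψ.comp measurable_fst)
    _ ≤ ENNReal.ofReal (C1 * s⁻¹) * ∫⁻ v, G2 v * K := by
        gcongr with v
        have : ∀ y, S.indicator (fun p => G2 p.2) (y, v) * ψ y =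
            G2 v * (Metric.ball (x - v) (a * Real.sqrt t)).indicator ψ y := by
          intro y
          by_cases hy : y ∈ Metric.ball (x - v) (a * Real.sqrt t)
          · rw [indicator_of_mem hy, indicator_of_mem (show (y, v) ∈ S from hy)]
          · rw [indicator_of_notMem hy, indicator_of_notMem (show (y, v) ∉ S from hy)]; simp
        simp_rw [this]
        rw [lintegral_const_mul _ (hψ.indicator measurableSet_ball), lintegral_indicator measurableSet_ball]
        gcongr
        exact hK _ measurableSet_ball (by rw [hball t ht])
    _ = _ := by rw [lintegral_mul_const _ hG2m, hk_int n (by positivity), one_mul]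

lemma main_aux (n : ℕ) (hn : 1 ≤ n) (r α : ℝ) (hr : 1 ≤ r) :
    ∃ C1 : ℝ, 1 ≤ C1 ∧ ∀ φ : EuclideanSpace ℝ (Fin n) → ℝ, LocallyIntegrable φ volume →
      ∀ N : ℝ, 0 < N → zygNorm n r α φ ≤ ENNReal.ofReal N → ∀ t : ℝ, 0 < t →
      ∃ U : EuclideanSpace ℝ (Fin n) → ℝ≥0∞, Measurable U ∧ (∀ x, ‖heatSg n t φ x‖ₑ ≤ U x) ∧
      (∀ x, U x ≤ ENNReal.ofReal
        ((C1 * (t ^ ((n:ℝ) / 2))⁻¹ * logFac (t ^ ((n:ℝ) / 2)) ^ (-α)) ^ (1 / r) * N)) ∧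
      (∀ s : ℝ, 0 < s → ∀ E : Set (EuclideanSpace ℝ (Fin n)), MeasurableSet E →
        volume E = ENNReal.ofReal s →
        ∫⁻ x in E, U x ^ r ≤ ENNReal.ofReal (logFac s ^ (-α) * N ^ r)) := by
  have hr0 : 0 < r := by linarith
  obtain ⟨C1, hC1, hsup⟩ := conv_sup n hn
  refine ⟨C1, hC1, fun φ hφ N hN hz t ht => ?_⟩
  have hφm := hφ.aestronglyMeasurable
  obtain ⟨g, hgm, hg⟩ : ∃ g : EuclideanSpace ℝ (Fin n) → ℝ, Measurable g ∧ φ =ᵐ[volume] g :=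
    ⟨hφm.mk φ, hφm.stronglyMeasurable_mk.measurable, hφm.ae_eq_mk⟩
  set w : EuclideanSpace ℝ (Fin n) → ℝ≥0∞ := fun x => ENNReal.ofReal (heatKernel n x t) with hw
  have hwm : Measurable w := hk_meas n t
  have hw1 : ∫⁻ x, w x = 1 := hk_int n ht
  have hψm : Measurable fun y => ‖g y‖ₑ ^ r := hgm.enorm.pow_const r
  have hset : ∀ s : ℝ, 0 < s → ∀ E : Set (EuclideanSpace ℝ (Fin n)), MeasurableSet E →
        volume E = ENNReal.ofReal s →
        ∫⁻ x in E, ‖g x‖ₑ ^ r ≤ ENNReal.ofReal (logFac s ^ (-α) * N ^ r) := by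
    intro s hs E hE hv
    refine le_trans (le_of_eq ?_) (int_le_of_zyg hr0 hN.le hz hs hE hv)
    apply lintegral_congr_ae
    filter_upwards [ae_restrict_of_ae hg] with x hx
    rw [hx, Real.enorm_eq_ofReal_abs, ENNReal.ofReal_rpow_of_nonneg (abs_nonneg _) hr0.le]
  have hUm : Measurable fun x => ∫⁻ y, w (x - y) * ‖g y‖ₑ := by
    apply Measurable.lintegral_prod_right'
      (f := fun p : EuclideanSpace ℝ (Fin n) × EuclideanSpace ℝ (Fin n) => w (p.1 - p.2) * ‖g p.2‖ₑ)
    exact (hwm.comp (measurable_fst.sub measurable_snd)).mul (hgm.enorm.comp measurable_snd)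
  have hJ : ∀ x, (∫⁻ y, w (x - y) * ‖g y‖ₑ) ^ r ≤ ∫⁻ y, w (x - y) * ‖g y‖ₑ ^ r := by
    intro x
    apply jensen (hwm.comp (measurable_const.sub measurable_id)) _ hgm hr
    rw [← hw1]; exact lintegral_sub_left_eq_self w x
  refine ⟨fun x => ∫⁻ y, w (x - y) * ‖g y‖ₑ, hUm, ?_, ?_, ?_⟩
  · intro x
    unfold heatSg
    refine (enorm_integral_le_lintegral_enorm _).trans (le_of_eq ?_)
    apply lintegral_congr_ae
    filter_upwards [hg] with y hy
    rw [enorm_mul, hy, Real.enorm_eq_ofReal (hk_nonneg n _ ht)]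
  · intro x
    have hs : 0 < t ^ ((n:ℝ) / 2) := by positivity
    have hL := L_pos hs
    have h1 := (hJ x).trans (hsup _ t _ hψm ht (hset _ hs) x)
    rw [← ENNReal.ofReal_mul (by positivity)] at h1
    rw [← ENNReal.rpow_le_rpow_iff hr0, ENNReal.ofReal_rpow_of_nonneg (by positivity) hr0.le]
    refine h1.trans (le_of_eq ?_)
    congr 1
    rw [Real.mul_rpow (by positivity) hN.le, ← Real.rpow_mul (by positivity), one_div,
      inv_mul_cancel₀ hr0.ne', Real.rpow_one]
    ring
  · intro s hs E hE hv
    refine (lintegral_mono fun x => hJ x).trans ?_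
    exact conv_set hwm hw1 hψm (fun E hE hv => hset s hs E hE hv) hE hv

lemma le_of_all {a b : ℝ≥0∞} {A : ℝ} (hb : b < ⊤)
    (h : ∀ N : ℝ, 0 < N → b ≤ ENNReal.ofReal N → a ≤ ENNReal.ofReal (A * N)) (hA : 0 < A) :
    a ≤ ENNReal.ofReal A * b := by
  have hA' : ENNReal.ofReal A ≠ 0 := by simpa using hA
  rw [mul_comm, ← ENNReal.div_le_iff hA' ENNReal.ofReal_ne_top]
  apply ENNReal.le_of_forall_pos_le_add
  intro ε hε _
  have hN : 0 < b.toReal + (ε:ℝ) := by positivity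
  have e : ENNReal.ofReal (b.toReal + (ε:ℝ)) = b + ε := by
    rw [ENNReal.ofReal_add (by positivity) (by positivity), ENNReal.ofReal_toReal hb.ne]; simp
  have := h _ hN (by rw [e]; exact le_self_add)
  rw [ENNReal.ofReal_mul hA.le, e] at this
  rw [ENNReal.div_le_iff hA' ENNReal.ofReal_ne_top, mul_comm]
  exact this

theorem stmt3 (n : ℕ) (hn : 1 ≤ n) (r q α β : ℝ) (hr : 1 ≤ r) (hrq : r ≤ q)
    (hα : 0 ≤ α) (hβ : 0 ≤ β) (hcrit : r = q → α ≤ β) :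
    ∃ C > (0 : ℝ),
      (∀ φ : EuclideanSpace ℝ (Fin n) → ℝ, LocallyIntegrable φ volume →
        zygNorm n r α φ < ⊤ → ∀ t : ℝ, 0 < t →
          zygNorm n q β (heatSg n t φ) ≤
            ENNReal.ofReal (C * t ^ (-((n : ℝ) / 2) * (1 / r - 1 / q)) *
                logFac t ^ (-α / r + β / q)) *
              zygNorm n r α φ) ∧
      (∀ φ : EuclideanSpace ℝ (Fin n) → ℝ, LocallyIntegrable φ volume →
        zygNorm n r α φ < ⊤ → ∀ t : ℝ, 0 < t →
          eLpNorm (heatSg n t φ) ⊤ volume ≤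
            ENNReal.ofReal (C * t ^ (-(n : ℝ) / (2 * r)) * logFac t ^ (-α / r)) *
              zygNorm n r α φ) := by
  have hr0 : 0 < r := by linarith
  have hq0 : 0 < q := by linarith
  have hm : 0 < (n:ℝ) / 2 := by positivity
  obtain ⟨C1, hC1, haux⟩ := main_aux n hn r α hr
  obtain ⟨C, hC, hcore⟩ := core hr hrq hα hβ hcrit hC1
  obtain ⟨D1, hD1, hL1⟩ := L_comp hm (-α / r + β / q)
  obtain ⟨D2, hD2, hL2⟩ := L_comp hm (-α / r)
  have hC10 : 0 < C1 := by linarith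
  have k1 : 0 < C ^ (1 / q) * D1 := by positivity
  have k2 : 0 < C1 ^ (1 / r) * D2 := by positivity
  refine ⟨C ^ (1 / q) * D1 + C1 ^ (1 / r) * D2, by positivity, ?_, ?_⟩
  · intro φ hφ hz t ht
    have hLt := L_pos ht
    have hs : 0 < t ^ ((n:ℝ) / 2) := by positivity
    have hL := L_pos hs
    refine le_of_all hz (fun N hN hzN => ?_) (by positivity)
    obtain ⟨U, hUm, hU, hU1, hU2⟩ := haux φ hφ N hN hzN t ht
    have key := hcore volume U _ N hUm hs hN hU1 hU2
    have hl1 := hL1 t ht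
    have hB : C ^ (1 / q) * (t ^ ((n:ℝ) / 2)) ^ (1 / q - 1 / r) *
        logFac (t ^ ((n:ℝ) / 2)) ^ (-α / r + β / q) * N ≤
        (C ^ (1 / q) * D1 + C1 ^ (1 / r) * D2) * t ^ (-((n : ℝ) / 2) * (1 / r - 1 / q)) *
                logFac t ^ (-α / r + β / q) * N := by
      have e : (t ^ ((n:ℝ) / 2)) ^ (1 / q - 1 / r) = t ^ (-((n : ℝ) / 2) * (1 / r - 1 / q)) := by
        rw [← Real.rpow_mul ht.le]; congr 1; ring
      rw [e]
      calc _ ≤ C ^ (1 / q) * t ^ (-((n : ℝ) / 2) * (1 / r - 1 / q)) *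
              (D1 * logFac t ^ (-α / r + β / q)) * N := by gcongr
        _ = (C ^ (1 / q) * D1) * t ^ (-((n : ℝ) / 2) * (1 / r - 1 / q)) *
                logFac t ^ (-α / r + β / q) * N := by ring
        _ ≤ _ := by gcongr; linarith
    refine le_trans ?_ (ENNReal.ofReal_le_ofReal hB)
    refine zyg_le hq0 (by positivity) fun s hs' E hE hv => ?_
    have h1 : ∫⁻ x in E, ENNReal.ofReal (|heatSg n t φ x| ^ q) ≤ ∫⁻ x in E, U x ^ q := by
      refine lintegral_mono fun x => ?_
      rw [← ENNReal.ofReal_rpow_of_nonneg (abs_nonneg _) hq0.le, ← Real.enorm_eq_ofReal_abs]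
      exact ENNReal.rpow_le_rpow (hU x) hq0.le
    refine h1.trans ((key s hs' E hE hv).trans (le_of_eq ?_))
    congr 2
    rw [Real.mul_rpow (by positivity) hN.le, Real.mul_rpow (by positivity) (by positivity),
      Real.mul_rpow (by positivity) (by positivity), ← Real.rpow_mul hC.le, ← Real.rpow_mul hs.le,
      ← Real.rpow_mul hL.le]
    have e1 : 1 / q * q = 1 := by field_simp
    have e2 : (1 / q - 1 / r) * q = 1 - q / r := by field_simp
    have e3 : (-α / r + β / q) * q = -α * q / r + β := by field_simp
    rw [e1, e2, e3, Real.rpow_one]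
  · intro φ hφ hz t ht
    have hLt := L_pos ht
    have hs : 0 < t ^ ((n:ℝ) / 2) := by positivity
    have hL := L_pos hs
    refine le_of_all hz (fun N hN hzN => ?_) (by positivity)
    obtain ⟨U, hUm, hU, hU1, hU2⟩ := haux φ hφ N hN hzN t ht
    rw [eLpNorm_exponent_top]
    refine eLpNormEssSup_le_of_ae_enorm_bound (ae_of_all _ fun x => ?_)
    refine (hU x).trans ((hU1 x).trans (ENNReal.ofReal_le_ofReal ?_))
    have hl2 := hL2 t ht
    rw [Real.mul_rpow (by positivity) (by positivity), Real.mul_rpow (by positivity) (by positivity),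
      ← Real.rpow_mul hL.le, ← Real.rpow_neg_one, ← Real.rpow_mul hs.le, ← Real.rpow_mul ht.le]
    have e1 : (n:ℝ) / 2 * (-1 * (1 / r)) = -(n:ℝ) / (2 * r) := by field_simp
    have e2 : -α * (1 / r) = -α / r := by ring
    rw [e1, e2]
    calc _ ≤ C1 ^ (1 / r) * t ^ (-(n : ℝ) / (2 * r)) * (D2 * logFac t ^ (-α / r)) * N := by gcongr
      _ = (C1 ^ (1 / r) * D2) * t ^ (-(n : ℝ) / (2 * r)) * logFac t ^ (-α / r) * N := by ring
      _ ≤ _ := by gcongr; linarith
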